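/- arXiv:2210.09586 — 3 statements merged into one kernel-verified Lean document; each statement's English description precedes it below -/
import Mathlib

section
/- Let G be a simple graph on a finite vertex type V, let S be a set of vertices, and let A assign to each vertex i a finite set A(i) of edges of G such that: A(i) ⊆ incidenceSet(i) for every i ∈ S, |A(i)| ≥ deg(i) for every i ∈ S, and A(i) and A(j) are disjoint for all distinct i, j ∈ S. Then A(i) = incidenceSet(i) for every i ∈ S, and S is an independent set of G. -/
/-- If `A` assigns to each vertex `i` of a set `S` a finite set of edges of `G` with
`A i ⊆ incidenceSet i`, `|A i| ≥ deg i`, and the sets `A i`, `i ∈ S`, pairwise disjoint,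
then `A i` is exactly the incidence set of `i` for every `i ∈ S`, and `S` is an
independent set of `G`. -/
theorem feasible_schedule_indepSet {V : Type*} [Fintype V] [DecidableEq V]
    (G : SimpleGraph V) [DecidableRel G.Adj] (S : Set V) (A : V → Finset (Sym2 V))
    (hsub : ∀ i ∈ S, (A i : Set (Sym2 V)) ⊆ G.incidenceSet i)
    (hcard : ∀ i ∈ S, G.degree i ≤ (A i).card)
    (hdisj : ∀ i ∈ S, ∀ j ∈ S, i ≠ j → Disjoint (A i) (A j)) :
    (∀ i ∈ S, A i = G.incidenceFinset i) ∧
      (∀ u ∈ S, ∀ w ∈ S, u ≠ w → ¬ G.Adj u w) := by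
  have hA : ∀ i ∈ S, A i = G.incidenceFinset i := fun i hi =>
    Finset.eq_of_subset_of_card_le
      (fun e he => (G.mem_incidenceFinset i e).2 (hsub i hi he))
      ((G.card_incidenceFinset_eq_degree i).trans_le (hcard i hi))
  refine ⟨hA, fun u hu w hw huw hadj => ?_⟩
  -- An edge between `u` and `w` would lie in both incidence sets, hence in `A u` and in `A w`.
  have hmem_u : s(u, w) ∈ A u := by
    rw [hA u hu, G.mem_incidenceFinset]
    exact ⟨hadj, Sym2.mem_mk_left u w⟩
  have hmem_w : s(u, w) ∈ A w := by
    rw [hA w hw, G.mem_incidenceFinset]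
    exact ⟨hadj, Sym2.mem_mk_right u w⟩
  exact Finset.disjoint_left.1 (hdisj u hu w hw huw) hmem_u hmem_w
end

section
/- For a simple graph G on a finite vertex type V, the maximum cardinality of a set S of vertices that admits an assignment A of finite edge sets satisfying A(i) ⊆ incidenceSet(i), |A(i)| ≥ deg(i) for all i ∈ S, and pairwise disjointness of the sets A(i), i ∈ S, is exactly the independence number α(G). In other words, the maximum number of vehicles that can successfully deliver their safety packets in the constructed instance equals the independence number of the graph. -/
/-!
The two sets of attainable cardinalities coincide, because the same vertex sets `S` are admissible
on both sides. Since `|incidenceSet i| = deg i`, the cardinality condition forces `A i` to be the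
full incidence set of `i`, and the incidence sets of two distinct vertices are disjoint exactly
when the vertices are not adjacent.
-/

/-- The maximum cardinality of a set `S` of vertices admitting an assignment `A` of
pairwise disjoint finite edge sets with `A i ⊆ incidenceSet i` and `|A i| ≥ deg i`
for all `i ∈ S` equals the independence number of `G`: the maximum number of vehicles
that can successfully deliver their safety packets equals the independence number. -/
theorem max_feasible_eq_indepNum {V : Type*} [Fintype V] [DecidableEq V]
    (G : SimpleGraph V) [DecidableRel G.Adj] :
    sSup {n : ℕ | ∃ (S : Finset V) (A : V → Finset (Sym2 V)),
        (∀ i ∈ S, (A i : Set (Sym2 V)) ⊆ G.incidenceSet i) ∧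
        (∀ i ∈ S, G.degree i ≤ (A i).card) ∧
        (∀ i ∈ S, ∀ j ∈ S, i ≠ j → Disjoint (A i) (A j)) ∧
        S.card = n} =
      sSup {n : ℕ | ∃ S : Finset V,
        (∀ u ∈ S, ∀ w ∈ S, u ≠ w → ¬ G.Adj u w) ∧ S.card = n} := by
  congr 1
  ext n
  constructor
  · rintro ⟨S, A, hsub, hdeg, hdisj, hcard⟩
    -- A subset of the incidence set with at least `deg i` elements is the whole incidence set.
    have hA : ∀ i ∈ S, A i = G.incidenceFinset i := fun i hi =>
      Finset.eq_of_subset_of_card_le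
        (fun e he => (G.mem_incidenceFinset i e).2 (hsub i hi he))
        (by rw [G.card_incidenceFinset_eq_degree]; exact hdeg i hi)
    refine ⟨S, fun u hu w hw huw hadj => ?_, hcard⟩
    have hd := hdisj u hu w hw huw
    rw [hA u hu, hA w hw] at hd
    -- The edge `uw` would be a slot used by both endpoints.
    exact Finset.disjoint_left.1 hd
      ((G.mem_incidenceFinset u s(u, w)).2 ⟨hadj, Sym2.mem_mk_left u w⟩)
      ((G.mem_incidenceFinset w s(u, w)).2 ⟨hadj, Sym2.mem_mk_right u w⟩)
  · rintro ⟨S, hS, hcard⟩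
    refine ⟨S, fun i => G.incidenceFinset i, fun i _ => (G.coe_incidenceFinset i).subset,
      fun i _ => (G.card_incidenceFinset_eq_degree i).ge, fun i hi j hj hij => ?_, hcard⟩
    exact Finset.disjoint_left.2 fun e hei hej =>
      hS i hi j hj hij (G.adj_of_mem_incidenceSet hij
        ((G.mem_incidenceFinset i e).1 hei) ((G.mem_incidenceFinset j e).1 hej))
end

section
/- For a simple graph G on a finite vertex type V with ℓ vertices, the minimum over all feasible pairs (S, A) — where S is a set of vertices and A assigns pairwise disjoint finite edge sets with A(i) ⊆ incidenceSet(i) and |A(i)| ≥ deg(i) for all i ∈ S — of the total two-period age Σ_{i ∈ V} (3 − 𝟙[i ∈ S]) equals 3ℓ − α(G). Hence minimizing the total AoI over two transmission periods in the constructed instance is equivalent to finding a maximum independent set of G. -/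
/-!
A set `S` of delivering vertices can be completed to a feasible pair `(S, A)` exactly when `S` is
independent. Since `|incidenceSet i| = deg i`, feasibility forces `A i` to be the whole incidence
set of `i` for `i ∈ S`, so two adjacent members of `S` would both own the edge joining them
(`not_adj_of_feasible`). Conversely, the incidence sets of pairwise nonadjacent vertices are
disjoint. The total age of `(S, A)` is `3ℓ - |S|` (`sum_age_eq`), so minimizing it means
maximizing `|S|` over independent sets.
-/

lemma sum_age_eq {V : Type*} [Fintype V] [DecidableEq V] (S : Finset V) :
    ∑ i : V, (3 - if i ∈ S then 1 else 0) = 3 * Fintype.card V - S.card := by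
  have h : ∑ i : V, (3 - if i ∈ S then 1 else 0) + S.card = 3 * Fintype.card V := by
    have hS : S.card = ∑ i : V, if i ∈ S then 1 else 0 := by simp
    rw [hS, ← Finset.sum_add_distrib, Finset.sum_congr rfl (g := fun _ => 3)]
    · simp [mul_comm]
    · intro i _
      split_ifs <;> rfl
  omega

lemma eq_incidenceFinset_of_degree_le {V : Type*} [Fintype V] [DecidableEq V]
    (G : SimpleGraph V) [DecidableRel G.Adj] {i : V} {B : Finset (Sym2 V)}
    (hsub : (B : Set (Sym2 V)) ⊆ G.incidenceSet i) (hcard : G.degree i ≤ B.card) :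
    B = G.incidenceFinset i := by
  refine Finset.eq_of_subset_of_card_le (fun e he => ?_) ?_
  · rw [SimpleGraph.mem_incidenceFinset]
    exact hsub he
  · rwa [SimpleGraph.card_incidenceFinset_eq_degree]

lemma not_adj_of_feasible {V : Type*} [Fintype V] [DecidableEq V]
    (G : SimpleGraph V) [DecidableRel G.Adj] {S : Finset V} {A : V → Finset (Sym2 V)}
    (hsub : ∀ i ∈ S, (A i : Set (Sym2 V)) ⊆ G.incidenceSet i)
    (hcard : ∀ i ∈ S, G.degree i ≤ (A i).card)
    (hdisj : ∀ i ∈ S, ∀ j ∈ S, i ≠ j → Disjoint (A i) (A j)) :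
    ∀ u ∈ S, ∀ w ∈ S, u ≠ w → ¬ G.Adj u w := by
  intro u hu w hw huw hadj
  have hd := hdisj u hu w hw huw
  rw [eq_incidenceFinset_of_degree_le G (hsub u hu) (hcard u hu),
    eq_incidenceFinset_of_degree_le G (hsub w hw) (hcard w hw), Finset.disjoint_left] at hd
  refine hd (a := s(u, w)) ?_ ?_
  · rw [SimpleGraph.mem_incidenceFinset]
    exact ⟨hadj, Sym2.mem_mk_left u w⟩
  · rw [SimpleGraph.mem_incidenceFinset]
    exact ⟨hadj, Sym2.mem_mk_right u w⟩


/-- The minimum over all feasible pairs `(S, A)` — `S` a set of vertices and `A`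
assigning pairwise disjoint finite edge sets with `A i ⊆ incidenceSet i` and
`|A i| ≥ deg i` for all `i ∈ S` — of the total two-period age
`Σ_{i ∈ V} (3 − 𝟙[i ∈ S])` equals `3ℓ − α(G)`, where `ℓ = |V|` and `α(G)` is the
independence number.  Hence minimizing total AoI over two transmission periods is
equivalent to finding a maximum independent set. -/
theorem min_two_period_age_eq {V : Type*} [Fintype V] [DecidableEq V]
    (G : SimpleGraph V) [DecidableRel G.Adj] :
    IsLeast {c : ℕ | ∃ (S : Finset V) (A : V → Finset (Sym2 V)),
        (∀ i ∈ S, (A i : Set (Sym2 V)) ⊆ G.incidenceSet i) ∧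
        (∀ i ∈ S, G.degree i ≤ (A i).card) ∧
        (∀ i ∈ S, ∀ j ∈ S, i ≠ j → Disjoint (A i) (A j)) ∧
        c = ∑ i : V, (3 - if i ∈ S then 1 else 0)}
      (3 * Fintype.card V -
        sSup {n : ℕ | ∃ S : Finset V,
          (∀ u ∈ S, ∀ w ∈ S, u ≠ w → ¬ G.Adj u w) ∧ S.card = n}) := by
  have hbdd : BddAbove {n : ℕ | ∃ S : Finset V,
      (∀ u ∈ S, ∀ w ∈ S, u ≠ w → ¬ G.Adj u w) ∧ S.card = n} := by
    refine ⟨Fintype.card V, ?_⟩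
    rintro n ⟨S, -, rfl⟩
    exact S.card_le_univ
  constructor
  · have hne : {n : ℕ | ∃ S : Finset V,
        (∀ u ∈ S, ∀ w ∈ S, u ≠ w → ¬ G.Adj u w) ∧ S.card = n}.Nonempty :=
      ⟨0, ∅, by simp, rfl⟩
    -- The supremum is attained: the set is nonempty and bounded above.
    obtain ⟨S, hS, hcard⟩ := Nat.sSup_mem hne hbdd
    refine ⟨S, fun i => G.incidenceFinset i, ?_, ?_, ?_, ?_⟩
    · intro i _
      simp
    · intro i _
      exact (G.card_incidenceFinset_eq_degree i).ge
    · intro i hi j hj hij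
      rw [Finset.disjoint_left]
      intro e hei hej
      rw [SimpleGraph.mem_incidenceFinset] at hei hej
      exact hS i hi j hj hij (G.adj_of_mem_incidenceSet hij hei hej)
    · rw [sum_age_eq, hcard]
  · rintro c ⟨S, A, hsub, hcard, hdisj, rfl⟩
    rw [sum_age_eq]
    exact Nat.sub_le_sub_left
      (le_csSup hbdd ⟨S, not_adj_of_feasible G hsub hcard hdisj, rfl⟩) _
end
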